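/- Let A₀(x) = f(|x|) with f : (0,∞) → ℝ smooth, let A₁ = A₂ = A₃ = 0, and let m ∈ ℝ. Define the Dirac Hamiltonian ℬψ = (α·(−i∇))ψ + A₀ψ + mβψ for smooth ψ : ℝ³∖{0} → ℂ⁴, where (α·(−i∇))ψ = Σ_j α_j(−i∂_jψ). Then ℬ commutes with Dirac's operator K: ℬ(Kψ) = K(ℬψ) for every smooth ψ : ℝ³∖{0} → ℂ⁴. -/

import Mathlib

noncomputable section

open Matrix

/-- Physical space ℝ³. -/
abbrev E3 := EuclideanSpace ℝ (Fin 3)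

/-- The Pauli matrices σ₁, σ₂, σ₃ (indexed by `Fin 3`, with `pauli 0 = σ₁`, etc.). -/
def pauli : Fin 3 → Matrix (Fin 2) (Fin 2) ℂ
  | 0 => !![0, 1; 1, 0]
  | 1 => !![0, -Complex.I; Complex.I, 0]
  | 2 => !![1, 0; 0, -1]

/-- The 4×4 block matrix `[[A, B], [C, D]]` built from 2×2 blocks. -/
def qblock (A B C D : Matrix (Fin 2) (Fin 2) ℂ) : Matrix (Fin 4) (Fin 4) ℂ :=
  Matrix.reindex finSumFinEquiv finSumFinEquiv (Matrix.fromBlocks A B C D)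

/-- The Dirac matrix `β = γ⁰ = [[I₂,0],[0,−I₂]]`. -/
def betaM : Matrix (Fin 4) (Fin 4) ℂ := qblock 1 0 0 (-1)

/-- The spin matrices `Σⱼ = [[σⱼ,0],[0,σⱼ]]` for j = 1,2,3. -/
def SigM (j : Fin 3) : Matrix (Fin 4) (Fin 4) ℂ := qblock (pauli j) 0 0 (pauli j)

/-- The partial derivative `∂ⱼψ` of a ℂ⁴-valued function on ℝ³. -/
def pd (j : Fin 3) (ψ : E3 → Fin 4 → ℂ) : E3 → Fin 4 → ℂ :=
  fun x => fderiv ℝ ψ x (EuclideanSpace.single j 1)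

/-- The orbital angular momentum operator `Lⱼψ = −i (x × ∇ψ)ⱼ` (cyclic indices in `Fin 3`). -/
def Lop (j : Fin 3) (ψ : E3 → Fin 4 → ℂ) : E3 → Fin 4 → ℂ :=
  fun x => (-Complex.I) • (x (j + 1) • pd (j + 2) ψ x - x (j + 2) • pd (j + 1) ψ x)

/-- The operator `L²ψ = Σⱼ Lⱼ(Lⱼψ)`. -/
def L2op (ψ : E3 → Fin 4 → ℂ) : E3 → Fin 4 → ℂ :=
  fun x => ∑ j, Lop j (Lop j ψ) x

/-- The operator `(Σ·L)ψ = Σⱼ Σⱼ(Lⱼψ)`. -/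
def SigL (ψ : E3 → Fin 4 → ℂ) : E3 → Fin 4 → ℂ :=
  fun x => ∑ j, (SigM j).mulVec (Lop j ψ x)

/-- Dirac's operator `Kψ = β(ψ + (Σ·L)ψ)`. -/
def Kop (ψ : E3 → Fin 4 → ℂ) : E3 → Fin 4 → ℂ :=
  fun x => betaM.mulVec (ψ x + SigL ψ x)


/-- The Dirac matrices `αⱼ = [[0,σⱼ],[σⱼ,0]]` for j = 1,2,3. -/
def alphaM (j : Fin 3) : Matrix (Fin 4) (Fin 4) ℂ := qblock 0 (pauli j) (pauli j) 0

/-- The Dirac Hamiltonian `ℬψ = (α·(−i∇))ψ + A₀ψ + mβψ` with radial electric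
potential `A₀(x) = f(|x|)` and mass `m`. -/
def Bop (f : ℝ → ℝ) (m : ℝ) (ψ : E3 → Fin 4 → ℂ) : E3 → Fin 4 → ℂ :=
  fun x => (∑ j, (alphaM j).mulVec ((-Complex.I) • pd j ψ x))
    + ((f ‖x‖ : ℝ) : ℂ) • ψ x + (m : ℂ) • betaM.mulVec (ψ x)

theorem pd_add (j : Fin 3) {φ χ : E3 → Fin 4 → ℂ} {x : E3} (hφ : DifferentiableAt ℝ φ x)
    (hχ : DifferentiableAt ℝ χ x) :
    pd j (fun y => φ y + χ y) x = pd j φ x + pd j χ x := by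
  simp [pd, fderiv_fun_add hφ hχ]

theorem pd_sub (j : Fin 3) {φ χ : E3 → Fin 4 → ℂ} {x : E3} (hφ : DifferentiableAt ℝ φ x)
    (hχ : DifferentiableAt ℝ χ x) :
    pd j (fun y => φ y - χ y) x = pd j φ x - pd j χ x := by
  simp [pd, fderiv_fun_sub hφ hχ]

theorem pd_sum (j : Fin 3) {φ : Fin 3 → E3 → Fin 4 → ℂ} {x : E3}
    (hφ : ∀ k, DifferentiableAt ℝ (φ k) x) :
    pd j (fun y => ∑ k, φ k y) x = ∑ k, pd j (φ k) x := by
  simp [pd, fderiv_fun_sum fun k _ => hφ k]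

theorem pd_const_smul (j : Fin 3) (c : ℂ) {φ : E3 → Fin 4 → ℂ} {x : E3}
    (hφ : DifferentiableAt ℝ φ x) :
    pd j (fun y => c • φ y) x = c • pd j φ x := by
  simp [pd, fderiv_fun_const_smul hφ c]

theorem DifferentiableAt.matrix_mulVec (M : Matrix (Fin 4) (Fin 4) ℂ) {φ : E3 → Fin 4 → ℂ}
    {x : E3} (hφ : DifferentiableAt ℝ φ x) :
    DifferentiableAt ℝ (fun y => M.mulVec (φ y)) x :=
  ((M.mulVecLin.restrictScalars ℝ).toContinuousLinearMap.differentiableAt).comp x hφ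

theorem pd_mulVec (j : Fin 3) (M : Matrix (Fin 4) (Fin 4) ℂ) {φ : E3 → Fin 4 → ℂ} {x : E3}
    (hφ : DifferentiableAt ℝ φ x) :
    pd j (fun y => M.mulVec (φ y)) x = M.mulVec (pd j φ x) := by
  have h := ((M.mulVecLin.restrictScalars ℝ).toContinuousLinearMap.hasFDerivAt).comp x
    hφ.hasFDerivAt
  exact congrArg (fun T => T (EuclideanSpace.single j 1)) h.fderiv

theorem differentiableAt_coord (k : Fin 3) (x : E3) : DifferentiableAt ℝ (fun y : E3 => y k) x := by
  fun_prop

theorem pd_coord_smul (j k : Fin 3) {φ : E3 → Fin 4 → ℂ} {x : E3}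
    (hφ : DifferentiableAt ℝ φ x) :
    pd j (fun y => y k • φ y) x = x k • pd j φ x + (if k = j then φ x else 0) := by
  have h : HasFDerivAt (fun y : E3 => y k) (EuclideanSpace.proj k : E3 →L[ℝ] ℝ) x :=
    (EuclideanSpace.proj k : E3 →L[ℝ] ℝ).hasFDerivAt
  simp only [pd, (h.fun_smul hφ.hasFDerivAt).fderiv]
  by_cases hkj : k = j <;> simp [hkj]

theorem hasFDerivAt_radial {f : ℝ → ℝ} {x : E3} (hx : x ≠ 0) (hf : DifferentiableAt ℝ f ‖x‖) :
    HasFDerivAt (fun y : E3 => f ‖y‖) ((deriv f ‖x‖ * ‖x‖⁻¹) • innerSL ℝ x) x := by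
  have h := ((hasStrictFDerivAt_norm_sq x).hasFDerivAt).sqrt (by simpa using hx)
  have hc : (1 / (2 * √(‖x‖ ^ 2))) • 2 • innerSL ℝ x = ‖x‖⁻¹ • innerSL ℝ x := by
    rw [Real.sqrt_sq (norm_nonneg x), ← Nat.cast_smul_eq_nsmul ℝ, smul_smul]
    congr 1
    field_simp
    norm_num
  rw [hc] at h
  simp only [Real.sqrt_sq (norm_nonneg _)] at h
  have h' := hf.hasDerivAt.comp_hasFDerivAt x h
  rw [smul_smul] at h'
  exact h'

theorem differentiableAt_radial_smul {f : ℝ → ℝ} {φ : E3 → Fin 4 → ℂ} {x : E3} (hx : x ≠ 0)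
    (hf : DifferentiableAt ℝ f ‖x‖) (hφ : DifferentiableAt ℝ φ x) :
    DifferentiableAt ℝ (fun y => ((f ‖y‖ : ℝ) : ℂ) • φ y) x := by
  simpa only [Complex.coe_smul] using (hasFDerivAt_radial hx hf).differentiableAt.fun_smul hφ

theorem pd_radial_smul (j : Fin 3) {f : ℝ → ℝ} {φ : E3 → Fin 4 → ℂ} {x : E3} (hx : x ≠ 0)
    (hf : DifferentiableAt ℝ f ‖x‖) (hφ : DifferentiableAt ℝ φ x) :
    pd j (fun y => ((f ‖y‖ : ℝ) : ℂ) • φ y) x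
      = ((f ‖x‖ : ℝ) : ℂ) • pd j φ x + (deriv f ‖x‖ * ‖x‖⁻¹ * x j) • φ x := by
  simp only [pd, Complex.coe_smul, ((hasFDerivAt_radial hx hf).fun_smul hφ.hasFDerivAt).fderiv]
  simp [EuclideanSpace.inner_single_right]

theorem pd_comm (j k : Fin 3) {φ : E3 → Fin 4 → ℂ} {x : E3} (hφ : ContDiffAt ℝ 2 φ x) :
    pd j (pd k φ) x = pd k (pd j φ) x := by
  have hd : DifferentiableAt ℝ (fderiv ℝ φ) x :=
    (hφ.fderiv_right (m := 1) (by norm_num)).differentiableAt (by norm_num)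
  have hs : IsSymmSndFDerivAt ℝ φ x := hφ.isSymmSndFDerivAt (by simp)
  have key : ∀ a b : Fin 3, pd a (pd b φ) x = fderiv ℝ (fderiv ℝ φ) x
      (EuclideanSpace.single a 1) (EuclideanSpace.single b 1) := fun a b => by
    change fderiv ℝ (fun y => fderiv ℝ φ y (EuclideanSpace.single b 1)) x _ = _
    rw [fderiv_clm_apply hd (by fun_prop)]
    simp
  rw [key, key]
  exact hs _ _

theorem ContDiffAt.differentiableAt_pd (j : Fin 3) {φ : E3 → Fin 4 → ℂ} {x : E3}
    (hφ : ContDiffAt ℝ 2 φ x) : DifferentiableAt ℝ (pd j φ) x :=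
  ((hφ.fderiv_right (m := 1) (by norm_num)).differentiableAt (by norm_num)).clm_apply
    (by fun_prop)

theorem ContDiffAt.differentiableAt_Lop (k : Fin 3) {φ : E3 → Fin 4 → ℂ} {x : E3}
    (hφ : ContDiffAt ℝ 2 φ x) : DifferentiableAt ℝ (Lop k φ) x :=
  (((differentiableAt_coord _ x).fun_smul (hφ.differentiableAt_pd _)).fun_sub
    ((differentiableAt_coord _ x).fun_smul (hφ.differentiableAt_pd _))).fun_const_smul _

theorem pd_Lop (j k : Fin 3) {φ : E3 → Fin 4 → ℂ} {x : E3} (hφ : ContDiffAt ℝ 2 φ x) :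
    pd j (Lop k φ) x = Lop k (pd j φ) x
      + (-Complex.I) • ((if k + 1 = j then pd (k + 2) φ x else 0)
        - (if k + 2 = j then pd (k + 1) φ x else 0)) := by
  have hc : ∀ i l : Fin 3, DifferentiableAt ℝ (fun y => y i • pd l φ y) x := fun i l =>
    (differentiableAt_coord i x).fun_smul (hφ.differentiableAt_pd l)
  change pd j (fun y => (-Complex.I) • (y (k + 1) • pd (k + 2) φ y - y (k + 2) • pd (k + 1) φ y)) x
    = _
  rw [pd_const_smul _ _ ((hc _ _).fun_sub (hc _ _)), pd_sub _ (hc _ _) (hc _ _),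
    pd_coord_smul _ _ (hφ.differentiableAt_pd _), pd_coord_smul _ _ (hφ.differentiableAt_pd _),
    pd_comm j _ hφ, pd_comm j _ hφ, Lop]
  module

/-- The partial derivatives of `Kψ`. -/
theorem pd_Kop (j : Fin 3) {φ : E3 → Fin 4 → ℂ} {x : E3} (hφ : ContDiffAt ℝ 2 φ x) :
    pd j (Kop φ) x = betaM.mulVec (pd j φ x + ∑ k, (SigM k).mulVec (pd j (Lop k φ) x)) := by
  have h0 : DifferentiableAt ℝ φ x := hφ.differentiableAt (by norm_num)
  have hL : ∀ k, DifferentiableAt ℝ (fun y => (SigM k).mulVec (Lop k φ y)) x := fun k =>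
    (hφ.differentiableAt_Lop k).matrix_mulVec _
  have hS : DifferentiableAt ℝ (SigL φ) x := DifferentiableAt.fun_sum fun k _ => hL k
  change pd j (fun y => betaM.mulVec (φ y + SigL φ y)) x = _
  rw [pd_mulVec _ _ (h0.fun_add hS), pd_add _ h0 hS]
  congr 2
  exact (pd_sum j hL).trans
    (Finset.sum_congr rfl fun k _ => pd_mulVec j _ (hφ.differentiableAt_Lop k))

/-- The partial derivatives of `ℬψ`. -/
theorem pd_Bop (k : Fin 3) {f : ℝ → ℝ} (m : ℝ) {φ : E3 → Fin 4 → ℂ} {x : E3} (hx : x ≠ 0)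
    (hf : DifferentiableAt ℝ f ‖x‖) (hφ : ContDiffAt ℝ 2 φ x) :
    pd k (Bop f m φ) x = Bop f m (pd k φ) x + (deriv f ‖x‖ * ‖x‖⁻¹ * x k) • φ x := by
  have h0 : DifferentiableAt ℝ φ x := hφ.differentiableAt (by norm_num)
  have hp : ∀ j, DifferentiableAt ℝ (fun y => (-Complex.I) • pd j φ y) x := fun j =>
    (hφ.differentiableAt_pd j).fun_const_smul _
  have hA : ∀ j, DifferentiableAt ℝ (fun y => (alphaM j).mulVec ((-Complex.I) • pd j φ y)) x :=
    fun j => (hp j).matrix_mulVec _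
  have hR := differentiableAt_radial_smul hx hf h0
  have hb := h0.matrix_mulVec betaM
  have hsum := DifferentiableAt.fun_sum (u := Finset.univ) fun j _ => hA j
  have hα : ∀ j, pd k (fun y => (alphaM j).mulVec ((-Complex.I) • pd j φ y)) x
      = (alphaM j).mulVec ((-Complex.I) • pd j (pd k φ) x) := fun j => by
    rw [pd_mulVec _ _ (hp j), pd_const_smul _ _ (hφ.differentiableAt_pd j), pd_comm k j hφ]
  change pd k (fun y => (∑ j, (alphaM j).mulVec ((-Complex.I) • pd j φ y))
    + ((f ‖y‖ : ℝ) : ℂ) • φ y + (m : ℂ) • betaM.mulVec (φ y)) x = _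
  rw [pd_add _ (hsum.fun_add hR) (hb.fun_const_smul _), pd_add _ hsum hR, pd_sum _ hA,
    pd_radial_smul _ hx hf h0, pd_const_smul _ _ hb, pd_mulVec _ _ h0,
    Finset.sum_congr rfl fun j _ => hα j, Bop]
  abel

theorem qblock_mulVec_zero (A B C D : Matrix (Fin 2) (Fin 2) ℂ) (w : Fin 4 → ℂ) :
    (qblock A B C D).mulVec w 0
      = A 0 0 * w 0 + A 0 1 * w 1 + B 0 0 * w 2 + B 0 1 * w 3 := by
  simp only [Matrix.mulVec, dotProduct, Fin.sum_univ_four]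
  rfl

theorem qblock_mulVec_one (A B C D : Matrix (Fin 2) (Fin 2) ℂ) (w : Fin 4 → ℂ) :
    (qblock A B C D).mulVec w 1
      = A 1 0 * w 0 + A 1 1 * w 1 + B 1 0 * w 2 + B 1 1 * w 3 := by
  simp only [Matrix.mulVec, dotProduct, Fin.sum_univ_four]
  rfl

theorem qblock_mulVec_two (A B C D : Matrix (Fin 2) (Fin 2) ℂ) (w : Fin 4 → ℂ) :
    (qblock A B C D).mulVec w 2
      = C 0 0 * w 0 + C 0 1 * w 1 + D 0 0 * w 2 + D 0 1 * w 3 := by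
  simp only [Matrix.mulVec, dotProduct, Fin.sum_univ_four]
  rfl

theorem qblock_mulVec_three (A B C D : Matrix (Fin 2) (Fin 2) ℂ) (w : Fin 4 → ℂ) :
    (qblock A B C D).mulVec w 3
      = C 1 0 * w 0 + C 1 1 * w 1 + D 1 0 * w 2 + D 1 1 * w 3 := by
  simp only [Matrix.mulVec, dotProduct, Fin.sum_univ_four]
  rfl

set_option maxHeartbeats 2000000 in
/-- For a radial potential `A₀(x) = f(|x|)` (`f` smooth on `(0,∞)`), the Dirac
Hamiltonian `ℬ` commutes with Dirac's operator `K` on smooth functions on `ℝ³∖{0}`. -/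
theorem Bop_comm_Kop (f : ℝ → ℝ) (hf : ContDiffOn ℝ (⊤ : ℕ∞) f (Set.Ioi 0)) (m : ℝ)
    (ψ : E3 → Fin 4 → ℂ) (hψ : ContDiffOn ℝ (⊤ : ℕ∞) ψ {x : E3 | x ≠ 0})
    (x : E3) (hx : x ≠ 0) :
    Bop f m (Kop ψ) x = Kop (Bop f m ψ) x := by
  have hψx : ContDiffAt ℝ 2 ψ x :=
    (hψ.contDiffAt (isOpen_ne.mem_nhds hx)).of_le (WithTop.coe_le_coe.2 (le_top : (2 : ℕ∞) ≤ ⊤))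
  have hfx : DifferentiableAt ℝ f ‖x‖ :=
    (hf.contDiffAt (Ioi_mem_nhds (norm_pos_iff.2 hx))).differentiableAt (by simp)
  have hB : Bop f m (Kop ψ) x = (∑ j, (alphaM j).mulVec ((-Complex.I) • pd j (Kop ψ) x))
    + ((f ‖x‖ : ℝ) : ℂ) • Kop ψ x + (m : ℂ) • betaM.mulVec (Kop ψ x) := rfl
  have h10 := pd_comm 1 0 hψx
  have h20 := pd_comm 2 0 hψx
  have h21 := pd_comm 2 1 hψx
  rw [hB]
  simp only [pd_Kop _ hψx, pd_Lop _ _ hψx]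
  simp only [Kop, SigL, Lop, pd_Bop _ m hx hfx hψx]
  simp only [Bop, Fin.sum_univ_three, Fin.isValue, zero_add, Fin.reduceAdd, Fin.reduceEq, h10, h20,
    h21, if_true, if_false, betaM, SigM, alphaM]
  generalize pd 0 (pd 0 ψ) x = q00
  generalize pd 0 (pd 1 ψ) x = q01
  generalize pd 0 (pd 2 ψ) x = q02
  generalize pd 1 (pd 1 ψ) x = q11
  generalize pd 1 (pd 2 ψ) x = q12
  generalize pd 2 (pd 2 ψ) x = q22
  generalize pd 0 ψ x = p0
  generalize pd 1 ψ x = p1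
  generalize pd 2 ψ x = p2
  generalize ψ x = u
  generalize deriv f ‖x‖ * ‖x‖⁻¹ = c
  generalize f ‖x‖ = v
  ext i
  fin_cases i <;>
  · simp [-Matrix.mulVec_mulVec, pauli, qblock_mulVec_zero, qblock_mulVec_one, qblock_mulVec_two,
      qblock_mulVec_three]
    ring_nf
    simp only [Complex.I_sq, Complex.I_pow_three, Complex.I_pow_four]
    ring

end
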